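/- arXiv:2211.08515 — 2 statements merged into one kernel-verified Lean document; each statement's English description precedes it below -/
import Mathlib

section
/- Let n ≥ 4 be an integer, let k be an integer with 2 ≤ k ≤ n−2, let G = (ℤ/nℤ) ⊕ (ℤ/nℤ), let (e₁,e₂) be a basis of G, and let S = e₁^[n−1] · ∏_{i=1}^{n+k−1}(x_i·e₁ + e₂), where x₁,…,x_{n+k−1} ∈ ℤ/nℤ and ∑_{i=1}^{n} x_i = 1 in ℤ/nℤ. If S has no nonempty zero-sum subsequence of length at most 2n−1−k, then there exists x ∈ ℤ/nℤ such that, setting f₂ = x·e₁ + e₂, the pair (e₁,f₂) is a basis of G and S = e₁^[n−1] · f₂^[n−1] · (e₁+f₂)^[k]. -/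
open Pointwise

lemma scherk_aux {G : Type*} [AddCommGroup G] [DecidableEq G] : ∀ (m : ℕ) (A B : Finset G),
    B.card ≤ m → (0:G) ∈ A → (0:G) ∈ B →
    (∀ a ∈ A, ∀ b ∈ B, a + b = 0 → a = 0 ∧ b = 0) → A.card + B.card ≤ (A + B).card + 1 := by
  intro m
  induction m with
  | zero =>
    intro A B h hA hB
    have := Finset.card_pos.mpr ⟨0, hB⟩
    omega
  | succ m ih =>
    intro A B hm hA hB hu
    by_cases hall : ∀ e ∈ A, ∀ b ∈ B, e + b ∈ A
    · have hB0 : B = {0} := by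
        apply Finset.eq_singleton_iff_unique_mem.mpr
        refine ⟨hB, fun b hb => ?_⟩
        have h1 : A.image (fun a => a + b) = A := by
          apply Finset.eq_of_subset_of_card_le
          · intro z hz
            obtain ⟨a, ha, rfl⟩ := Finset.mem_image.mp hz
            exact hall a ha b hb
          · rw [Finset.card_image_of_injective _ (add_left_injective b)]
        rw [← h1] at hA
        obtain ⟨a, ha, hab⟩ := Finset.mem_image.mp hA
        exact (hu a ha b hb hab).2
      subst hB0
      simp
    · push Not at hall
      obtain ⟨e, he, b0, hb0, hne⟩ := hall
      set A' := A ∪ B.image (fun b => e + b) with hA'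
      set B' := B.filter (fun b => e + b ∈ A) with hB'
      have hlt : B'.card < B.card := by
        apply Finset.card_lt_card
        refine ⟨Finset.filter_subset _ _, fun h => ?_⟩
        exact hne (Finset.mem_filter.mp (h hb0)).2
      have hsub : A' + B' ⊆ A + B := by
        intro z hz
        obtain ⟨a, ha, b, hb, rfl⟩ := Finset.mem_add.mp hz
        obtain ⟨hb1, hb2⟩ := Finset.mem_filter.mp hb
        rcases Finset.mem_union.mp ha with ha | ha
        · exact Finset.add_mem_add ha hb1
        · obtain ⟨c, hc, rfl⟩ := Finset.mem_image.mp ha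
          have : e + c + b = (e + b) + c := by abel
          rw [this]
          exact Finset.add_mem_add hb2 hc
      have hcard : A'.card + B'.card = A.card + B.card := by
        have h1 := Finset.card_union_add_card_inter A (B.image (fun b => e + b))
        have h2 : (A ∩ B.image (fun b => e + b)) = B'.image (fun b => e + b) := by
          ext z
          simp only [hB', Finset.mem_inter, Finset.mem_image, Finset.mem_filter]
          constructor
          · rintro ⟨hz, b, hb, rfl⟩
            exact ⟨b, ⟨hb, hz⟩, rfl⟩
          · rintro ⟨b, ⟨hb, hz⟩, rfl⟩
            exact ⟨hz, b, hb, rfl⟩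
        rw [h2, Finset.card_image_of_injective _ (add_right_injective e),
          Finset.card_image_of_injective _ (add_right_injective e)] at h1
        exact h1
      have h3 := ih A' B' (by omega) (Finset.mem_union_left _ hA)
        (Finset.mem_filter.mpr ⟨hB, by simpa using he⟩) (by
          intro a ha b hb hab
          obtain ⟨hb1, hb2⟩ := Finset.mem_filter.mp hb
          rcases Finset.mem_union.mp ha with ha | ha
          · exact hu a ha b hb1 hab
          · obtain ⟨c, hc, rfl⟩ := Finset.mem_image.mp ha
            have h4 := hu (e + b) hb2 c hc (by rw [← hab]; abel)
            have h5 := hu e he b hb1 h4.1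
            refine ⟨?_, h5.2⟩
            rw [h5.1, h4.2, add_zero])
      have h6 := Finset.card_le_card hsub
      omega

lemma short_zs {G : Type*} [AddCommGroup G] [DecidableEq G] : ∀ (v : ℕ) (T : Multiset G),
    (0:G) ∉ T → (∀ g, T.count g ≤ v) →
    (∀ Y ≤ T, Y ≠ 0 → Multiset.card Y ≤ v → Y.sum ≠ 0) →
    ∃ C : Finset G, (0:G) ∈ C ∧ (∀ c ∈ C, ∃ Y ≤ T, Multiset.card Y ≤ v ∧ Y.sum = c) ∧
      Multiset.card T + 1 ≤ C.card := by
  intro v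
  induction v with
  | zero =>
    intro T h0 hc _
    have : T = 0 := by
      apply Multiset.eq_zero_of_forall_notMem
      intro g hg
      have := Multiset.count_pos.mpr hg
      have := hc g
      omega
    subst this
    exact ⟨{0}, by simp, by simp, by simp⟩
  | succ v ih =>
    intro T h0 hc hz
    have hd : T.dedup ≤ T := Multiset.dedup_le T
    have hle : T - T.dedup ≤ T := Multiset.sub_le_self _ _
    obtain ⟨C, hC0, hC1, hC2⟩ := ih (T - T.dedup) (fun h => h0 (Multiset.mem_of_le hle h))
      (by
        intro g
        rw [Multiset.count_sub, Multiset.count_dedup]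
        have := hc g
        split_ifs with h
        · omega
        · rw [Multiset.count_eq_zero_of_notMem h]; omega)
      (fun Y hY hY0 hYc => hz Y (hY.trans hle) hY0 (by omega))
    have key : ∀ a ∈ T, ∀ Y ≤ T - T.dedup, a ::ₘ Y ≤ T := by
      intro a ha Y hY
      have h1 : ({a} : Multiset G) ≤ T.dedup := by
        rw [Multiset.singleton_le]; exact Multiset.mem_dedup.mpr ha
      have h2 := add_le_add h1 hY
      rw [Multiset.singleton_add, add_comm T.dedup, Multiset.sub_add_cancel hd] at h2
      exact h2
    have hs := scherk_aux _ (insert 0 T.toFinset) C le_rfl (Finset.mem_insert_self _ _) hC0 (by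
      intro a ha b hb hab
      rcases Finset.mem_insert.mp ha with rfl | ha
      · exact ⟨rfl, by simpa using hab⟩
      · exfalso
        obtain ⟨Y, hY, hYc, rfl⟩ := hC1 b hb
        exact hz (a ::ₘ Y) (key a (Multiset.mem_toFinset.mp ha) Y hY) (by simp)
          (by simp; omega) (by simpa using hab))
    refine ⟨insert 0 T.toFinset + C, ?_, ?_, ?_⟩
    · exact Finset.mem_add.mpr ⟨0, Finset.mem_insert_self _ _, 0, hC0, by simp⟩
    · intro c hc
      obtain ⟨a, ha, b, hb, rfl⟩ := Finset.mem_add.mp hc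
      obtain ⟨Y, hY, hYc, rfl⟩ := hC1 b hb
      rcases Finset.mem_insert.mp ha with rfl | ha
      · exact ⟨Y, hY.trans hle, by omega, by simp⟩
      · exact ⟨a ::ₘ Y, key a (Multiset.mem_toFinset.mp ha) Y hY, by simp; omega, by simp⟩
    · rw [Finset.card_insert_of_notMem (by simpa using h0)] at hs
      have h5 := Multiset.card_sub hd
      have h6 := Multiset.card_le_card hd
      have h7 : T.toFinset.card = Multiset.card T.dedup := rfl
      omega

def ssums {G : Type*} [AddCommGroup G] [DecidableEq G] (M : Multiset G) : Finset G :=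
  (M.powerset.map Multiset.sum).toFinset

lemma mem_ssums {G : Type*} [AddCommGroup G] [DecidableEq G] {M : Multiset G} {z : G} :
    z ∈ ssums M ↔ ∃ R ≤ M, R.sum = z := by
  simp [ssums]

lemma ssums_mono {G : Type*} [AddCommGroup G] [DecidableEq G] {M N : Multiset G} (h : M ≤ N) :
    ssums M ⊆ ssums N := by
  intro z hz
  obtain ⟨R, hR, e⟩ := mem_ssums.mp hz
  exact mem_ssums.mpr ⟨R, hR.trans h, e⟩

lemma ssums_cons {G : Type*} [AddCommGroup G] [DecidableEq G] {M : Multiset G} {a z : G}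
    (h : z ∈ ssums M) : z + a ∈ ssums (a ::ₘ M) := by
  obtain ⟨R, hR, e⟩ := mem_ssums.mp h
  exact mem_ssums.mpr ⟨a ::ₘ R, (Multiset.cons_le_cons_iff a).mpr hR, by simp [e, add_comm]⟩

lemma ssums_grow {G : Type*} [AddCommGroup G] [DecidableEq G] {M : Multiset G} {a z : G}
    (h : z ∈ ssums M) (h' : z + a ∉ ssums M) : (ssums M).card + 1 ≤ (ssums (a ::ₘ M)).card := by
  apply Finset.card_lt_card
  refine ⟨ssums_mono (Multiset.le_cons_self _ _), fun hh => h' (hh (ssums_cons h))⟩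

lemma stuck {G : Type*} [AddCommGroup G] [DecidableEq G] {M : Multiset G} :
    ∀ R : Multiset G, (∀ a ∈ R, ∀ z ∈ ssums M, z + a ∈ ssums M) → M.sum + R.sum ∈ ssums M := by
  intro R
  induction R using Multiset.induction with
  | empty => intro _; simpa using mem_ssums.mpr ⟨M, le_rfl, rfl⟩
  | cons a R ih =>
    intro h
    have h1 := ih (fun b hb => h b (Multiset.mem_cons_of_mem hb))
    have h2 := h a (Multiset.mem_cons_self _ _) _ h1
    rw [Multiset.sum_cons]
    convert h2 using 1
    abel

lemma cast_inj_lt {n a b : ℕ} (ha : a < n) (hb : b < n) (h : (a : ZMod n) = b) : a = b := by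
  rw [ZMod.natCast_eq_natCast_iff'] at h
  rwa [Nat.mod_eq_of_lt ha, Nat.mod_eq_of_lt hb] at h

def itv (n k : ℕ) (b : ZMod n) : Finset (ZMod n) := (Finset.range k).image (fun j : ℕ => b + (j : ZMod n))

lemma notMem_itv {n k : ℕ} {b : ZMod n} {j : ℕ} (h1 : k ≤ j) (h2 : j < n) :
    b + (j : ZMod n) ∉ itv n k b := by
  intro h
  obtain ⟨i, hi, e⟩ := Finset.mem_image.mp h
  rw [Finset.mem_range] at hi
  have := cast_inj_lt (by omega) h2 (add_left_cancel e)
  omega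

lemma miss_two {n k : ℕ} {b : ZMod n} {C : Finset (ZMod n)} (hC : C ⊆ itv n k b) (hk : k ≤ n)
    (hcard : k ≤ C.card + 1) {i j : ℕ} (hij : i ≠ j) (hi : i < k) (hj : j < k)
    (h1 : b + (i : ZMod n) ∉ C) (h2 : b + (j : ZMod n) ∉ C) : False := by
  have hsub : C ⊆ (((Finset.range k).erase i).erase j).image (fun j : ℕ => b + (j : ZMod n)) := by
    intro z hz
    obtain ⟨l, hl, rfl⟩ := Finset.mem_image.mp (hC hz)
    apply Finset.mem_image.mpr
    refine ⟨l, ?_, rfl⟩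
    simp only [Finset.mem_erase]
    refine ⟨?_, ?_, hl⟩
    · rintro rfl; exact h2 hz
    · rintro rfl; exact h1 hz
  have := (Finset.card_le_card hsub).trans Finset.card_image_le
  rw [Finset.card_erase_of_mem (by simp [hij.symm, hj]), Finset.card_erase_of_mem (by simp [hi])] at this
  simp at this
  omega

lemma itv_shift {n k : ℕ} (hk1 : 2 ≤ k) (hk2 : k + 2 ≤ n) {b w : ZMod n} {C : Finset (ZMod n)}
    (hC : C ⊆ itv n k b) (hcard : k ≤ C.card + 1) (hw : ∀ z ∈ C, z + w ∈ itv n k b) :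
    w = 0 ∨ w = 1 ∨ w = -1 := by
  have : NeZero n := ⟨by omega⟩
  obtain ⟨w', hlt, rfl⟩ : ∃ w' : ℕ, w' < n ∧ (w' : ZMod n) = w :=
    ⟨w.val, ZMod.val_lt w, ZMod.natCast_zmod_val w⟩
  by_contra hcon
  push Not at hcon
  obtain ⟨h0, h1, h2⟩ := hcon
  have a0 : w' ≠ 0 := by rintro rfl; simp at h0
  have a1 : w' ≠ 1 := by rintro rfl; simp at h1
  have a2 : w' ≠ n - 1 := by
    rintro rfl; apply h2; rw [Nat.cast_sub (by omega)]; simp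
  have key : ∀ j : ℕ, k ≤ j + w' → j + w' < n → b + (j : ZMod n) ∉ C := by
    intro j hj hj2 hm
    have := hw _ hm
    rw [add_assoc, ← Nat.cast_add] at this
    exact notMem_itv hj hj2 this
  by_cases hc : k - 1 + w' < n
  · exact miss_two hC (by omega) hcard (i := k - 1) (j := k - 2) (by omega) (by omega) (by omega)
      (key _ (by omega) (by omega)) (key _ (by omega) (by omega))
  · exact miss_two hC (by omega) hcard (i := n - 1 - w') (j := n - 2 - w') (by omega) (by omega)
      (by omega) (key _ (by omega) (by omega)) (key _ (by omega) (by omega))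

lemma not_both {n k : ℕ} (hk1 : 2 ≤ k) (hk2 : k + 2 ≤ n) {b : ZMod n} {C : Finset (ZMod n)}
    (hC : C ⊆ itv n k b) (hcard : k ≤ C.card + 1) (hw : ∀ z ∈ C, z + 1 ∈ itv n k b)
    (hw' : ∀ z ∈ C, z + (-1) ∈ itv n k b) : False := by
  refine miss_two hC (by omega) hcard (i := k - 1) (j := 0) (by omega) (by omega) (by omega) ?_ ?_
  · intro h
    have := hw _ h
    rw [add_assoc, ← Nat.cast_succ] at this
    exact notMem_itv (by omega) (by omega) this
  · intro h
    have := hw' _ h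
    have e : b + ((0:ℕ) : ZMod n) + (-1) = b + ((n - 1 : ℕ) : ZMod n) := by
      rw [Nat.cast_sub (by omega)]; simp
    rw [e] at this
    exact notMem_itv (by omega) (by omega) this

lemma closed_univ {n : ℕ} [NeZero n] {C : Finset (ZMod n)} (h0 : (0 : ZMod n) ∈ C) {w : ZMod n}
    (hw : w = 1 ∨ w = -1) (h : ∀ z ∈ C, z + w ∈ C) (y : ZMod n) : y ∈ C := by
  have h1 : ∀ j : ℕ, (j : ZMod n) * w ∈ C := by
    intro j
    induction j with
    | zero => simpa using h0
    | succ j ih =>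
      have := h _ ih
      push_cast
      rwa [add_mul, one_mul]
  rcases hw with rfl | rfl
  · have := h1 y.val
    simpa using this
  · have := h1 (-y).val
    simpa using this

lemma exists_sub_card {α : Type*} {j : ℕ} {M : Multiset α} (h : j ≤ Multiset.card M) :
    ∃ N ≤ M, Multiset.card N = j := by
  induction M using Quotient.inductionOn with
  | h l => exact ⟨(l.take j : List α), (List.take_sublist j l).subperm, by simpa using h⟩

lemma core_U {n k : ℕ} (hk1 : 2 ≤ k) (hk2 : k + 2 ≤ n) {b : ZMod n} {U : Multiset (ZMod n)}
    (hB : ∀ R ≤ U, Multiset.card R ≤ k - 1 → R.sum ∈ itv n k b)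
    (hs : U.sum ∉ itv n k b) (hcard : k ≤ Multiset.card U) (h0 : (0 : ZMod n) ∉ U) :
    ∃ ε : ZMod n, (ε = 1 ∨ ε = -1) ∧ ∀ u ∈ U, u = ε := by
  have : NeZero n := ⟨by omega⟩
  have hss : ∀ M ≤ U, Multiset.card M ≤ k - 1 → ssums M ⊆ itv n k b := by
    intro M hM hc z hz
    obtain ⟨R, hR, rfl⟩ := mem_ssums.mp hz
    exact hB R (hR.trans hM) ((Multiset.card_le_card hR).trans hc)
  have hcons : ∀ M ≤ U, ∀ a ∈ U - M, a ::ₘ M ≤ U := by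
    intro M hM a ha
    have h1 : ({a} : Multiset (ZMod n)) ≤ U - M := Multiset.singleton_le.mpr ha
    have h2 := add_le_add h1 (le_refl M)
    rwa [Multiset.sub_add_cancel hM, Multiset.singleton_add] at h2
  -- greedy extension
  have hext : ∀ d : ℕ, ∀ M ≤ U, Multiset.card M + d = k - 2 →
      Multiset.card M + 1 ≤ (ssums M).card →
      ∃ M', M ≤ M' ∧ M' ≤ U ∧ Multiset.card M' = k - 2 ∧ k - 1 ≤ (ssums M').card := by
    intro d
    induction d with
    | zero =>
      intro M hM hd hc
      exact ⟨M, le_rfl, hM, by omega, by omega⟩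
    | succ d ih =>
      intro M hM hd hc
      have : ∃ a ∈ U - M, ∃ z ∈ ssums M, z + a ∉ ssums M := by
        by_contra hcon
        push Not at hcon
        have h1 := stuck (U - M) hcon
        rw [← Multiset.sum_add, add_comm, Multiset.sub_add_cancel hM] at h1
        exact hs (hss M hM (by omega) h1)
      obtain ⟨a, ha, z, hz, hza⟩ := this
      have h1 := ssums_grow hz hza
      obtain ⟨M', h2, h3⟩ := ih (a ::ₘ M) (hcons M hM a ha) (by simp; omega) (by simp; omega)
      exact ⟨M', (Multiset.le_cons_self _ _).trans h2, h3⟩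
  have hfin : ∀ M ≤ U, Multiset.card M = k - 2 → k - 1 ≤ (ssums M).card →
      ∀ w ∈ U - M, w = 1 ∨ w = -1 := by
    intro M hM hc hsc w hw
    have h1 := itv_shift hk1 hk2 (w := w) (hss M hM (by omega)) (by omega) (by
      intro z hz
      exact hss _ (hcons M hM w hw) (by simp; omega) (ssums_cons hz))
    rcases h1 with rfl | h1
    · exact absurd (Multiset.mem_of_le (Multiset.sub_le_self _ _) hw) h0
    · exact h1
  have hpm : ∀ M : Multiset (ZMod n), M ≤ U → Multiset.card M ≤ k - 1 → (∀ u ∈ M, u = 1 ∨ u = -1) →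
      Multiset.card M + 1 ≤ (ssums M).card := by
    intro M
    induction M using Multiset.induction with
    | empty =>
      intro _ _ _
      have : (0 : ZMod n) ∈ ssums 0 := mem_ssums.mpr ⟨0, le_rfl, rfl⟩
      have := Finset.card_pos.mpr ⟨_, this⟩
      simpa using this
    | cons a M ih =>
      intro hM hc hu
      have hMU := (Multiset.le_cons_self M a).trans hM
      rw [Multiset.card_cons] at hc
      have h1 := ih hMU (by omega) (fun u hu' => hu u (Multiset.mem_cons_of_mem hu'))
      have : ∃ z ∈ ssums M, z + a ∉ ssums M := by
        by_contra hcon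
        push Not at hcon
        have h2 := closed_univ (mem_ssums.mpr ⟨0, Multiset.zero_le _, rfl⟩)
          (hu a (Multiset.mem_cons_self _ _)) hcon U.sum
        exact hs (hss M hMU (by omega) h2)
      obtain ⟨z, hz, hza⟩ := this
      have h2 := ssums_grow hz hza
      rw [Multiset.card_cons]
      omega
  have hall : ∀ u ∈ U, u = 1 ∨ u = -1 := by
    intro u hu
    set P := U.filter (fun u => u = 1 ∨ u = -1) with hP
    have hPU : P ≤ U := Multiset.filter_le _ _
    have hPm : ∀ u ∈ P, u = 1 ∨ u = -1 := fun u hu => (Multiset.mem_filter.mp hu).2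
    by_cases hc : k - 2 ≤ Multiset.card P
    · by_contra hcon
      obtain ⟨M, hM, hMc⟩ := exists_sub_card hc
      have h1 := hpm M (hM.trans hPU) (by omega) (fun u hu => hPm u (Multiset.mem_of_le hM hu))
      refine hcon (hfin M (hM.trans hPU) hMc (by omega) u ?_)
      rw [Multiset.mem_sub, Multiset.count_eq_zero_of_notMem]
      · exact Multiset.count_pos.mpr hu
      · intro h
        exact hcon (hPm u (Multiset.mem_of_le hM h))
    · exfalso
      obtain ⟨M', h1, h2, h3, h4⟩ := hext (k - 2 - Multiset.card P) P hPU (by omega)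
        (hpm P hPU (by omega) hPm)
      have h5 : 0 < Multiset.card (U - M') := by rw [Multiset.card_sub h2]; omega
      obtain ⟨w, hw⟩ := Multiset.card_pos_iff_exists_mem.mp h5
      have h6 := hfin M' h2 h3 h4 w hw
      rw [Multiset.mem_sub] at hw
      have h7 := Multiset.count_le_of_le w h1
      rw [hP, Multiset.count_filter, if_pos h6] at h7
      omega
  by_contra hcon
  push Not at hcon
  obtain ⟨u, hu, hu1⟩ := hcon 1 (Or.inl rfl)
  obtain ⟨u', hu', hu1'⟩ := hcon (-1) (Or.inr rfl)
  have e1 : u = -1 := (hall u hu).resolve_left hu1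
  have e2 : u' = 1 := (hall u' hu').resolve_right hu1'
  subst e1 e2
  have hpair : ({-1, 1} : Multiset (ZMod n)) ≤ U := by
    rw [Multiset.le_iff_subset (by simpa using hu1)]
    intro z hz
    simp at hz
    rcases hz with rfl | rfl <;> assumption
  have hc2 : k - 2 ≤ Multiset.card (U - {-1, 1}) := by
    rw [Multiset.card_sub hpair]; simp; omega
  obtain ⟨M, hM, hMc⟩ := exists_sub_card hc2
  have hMU : M ≤ U := hM.trans (Multiset.sub_le_self _ _)
  have h1 := hpm M hMU (by omega) (fun u hu => hall u (Multiset.mem_of_le hMU hu))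
  have h2 : ({-1, 1} : Multiset (ZMod n)) ≤ U - M := by
    have h3 := add_le_add hM (le_refl ({-1, 1} : Multiset (ZMod n)))
    rw [Multiset.sub_add_cancel hpair, add_comm] at h3
    have h4 := tsub_le_tsub_right h3 M
    rwa [add_tsub_cancel_right] at h4
  refine not_both hk1 hk2 (hss M hMU (by omega)) (by omega) ?_ ?_
  · intro z hz
    exact hss _ (hcons M hMU 1 (Multiset.mem_of_le h2 (by simp))) (by simp; omega) (ssums_cons hz)
  · intro z hz
    exact hss _ (hcons M hMU (-1) (Multiset.mem_of_le h2 (by simp))) (by simp; omega) (ssums_cons hz)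

lemma main_W {n k v : ℕ} (hk1 : 2 ≤ k) (hk2 : k + 2 ≤ n) {T W : Multiset (ZMod n)}
    (h0 : (0 : ZMod n) ∉ T) (hcard : Multiset.card T + v = n + k - 1)
    (hX : ∀ I ≤ T + Multiset.replicate v 0, Multiset.card I = n →
      ∃ c : ℕ, 1 ≤ c ∧ c ≤ k ∧ I.sum = (c : ZMod n))
    (hW : W ≤ T) (hWk : k ≤ Multiset.card W + v)
    (hZ : ∀ s ≤ Multiset.card W + v, ∃ Z ≤ W + Multiset.replicate v (0 : ZMod n),
      Multiset.card Z = s ∧ Z.sum = 0) :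
    Multiset.card W + v < n ∧
    ∃ ε : ZMod n, (ε = 1 ∨ ε = -1) ∧ ∀ u ∈ T - W, u = ε := by
  have hlt : Multiset.card W + v < n := by
    by_contra hcon
    obtain ⟨Z, hZ1, hZ2, hZ3⟩ := hZ n (by omega)
    obtain ⟨c, hc1, hc2, hc3⟩ := hX Z (hZ1.trans (by gcongr)) hZ2
    rw [hZ3] at hc3
    have := cast_inj_lt (n := n) (a := 0) (b := c) (by omega) (by omega) (by simpa using hc3)
    omega
  refine ⟨hlt, ?_⟩
  have hUc := Multiset.card_sub hW
  have hWc := Multiset.card_le_card hW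
  refine core_U hk1 hk2 (b := (T - W).sum - (k : ZMod n)) ?_ ?_ (by omega)
    (fun h => h0 (Multiset.mem_of_le (Multiset.sub_le_self _ _) h))
  · intro R hR hRc
    have hc := Multiset.card_sub hR
    have hRc' := Multiset.card_le_card hR
    obtain ⟨Z, hZ1, hZ2, hZ3⟩ := hZ (n - Multiset.card (T - W - R)) (by omega)
    obtain ⟨c, hc1, hc2, hc3⟩ := hX ((T - W - R) + Z) (by
      have := add_le_add (Multiset.sub_le_self (T - W) R) hZ1
      rwa [← add_assoc, Multiset.sub_add_cancel hW] at this) (by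
      rw [Multiset.card_add]; omega)
    have hsum : (T - W - R).sum + R.sum = (T - W).sum := by
      rw [← Multiset.sum_add, Multiset.sub_add_cancel hR]
    rw [Multiset.sum_add, hZ3, add_zero] at hc3
    refine Finset.mem_image.mpr ⟨k - c, by simp; omega, ?_⟩
    rw [Nat.cast_sub hc2, ← hsum, hc3]
    abel
  · intro h
    have := notMem_itv (n := n) (k := k) (b := (T - W).sum - (k : ZMod n)) (j := k) le_rfl (by omega)
    rw [sub_add_cancel] at this
    exact this h

lemma extract_W {n k v : ℕ} (hn : n ≠ 0) {T : Multiset (ZMod n)}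
    (h0 : (0 : ZMod n) ∉ T) (hcard : Multiset.card T + v = n + k - 1)
    (hv : ∀ g, T.count g ≤ v) :
    ∀ j ≤ k, ∃ W ≤ T, j ≤ Multiset.card W + v ∧
      ∀ s ≤ Multiset.card W + v, ∃ Z ≤ W + Multiset.replicate v (0 : ZMod n),
      Multiset.card Z = s ∧ Z.sum = 0 := by
  have : NeZero n := ⟨hn⟩
  intro j
  induction j with
  | zero =>
    intro _
    refine ⟨0, Multiset.zero_le _, Nat.zero_le _, fun s hs => ⟨Multiset.replicate s 0, ?_, by simp, by simp⟩⟩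
    simp only [Multiset.card_zero, zero_add] at hs ⊢
    exact (Multiset.replicate_le_replicate _).mpr hs
  | succ j ih =>
    intro hj
    obtain ⟨W, hW, hWj, hZ⟩ := ih (by omega)
    by_cases hge : j + 1 ≤ Multiset.card W + v
    · exact ⟨W, hW, hge, hZ⟩
    have hUc := Multiset.card_sub hW
    have hWc := Multiset.card_le_card hW
    have hY : ∃ Y ≤ T - W, Y ≠ 0 ∧ Multiset.card Y ≤ v ∧ Y.sum = 0 := by
      by_contra hcon
      push Not at hcon
      obtain ⟨C, _, _, hC⟩ := short_zs v (T - W)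
        (fun h => h0 (Multiset.mem_of_le (Multiset.sub_le_self _ _) h))
        (fun g => (Multiset.count_le_of_le g (Multiset.sub_le_self _ _)).trans (hv g)) hcon
      have := Finset.card_le_univ C
      rw [ZMod.card] at this
      omega
    obtain ⟨Y, hY1, hY0, hYv, hYs⟩ := hY
    have hYp := Multiset.card_pos.mpr hY0
    refine ⟨Y + W, ?_, ?_, ?_⟩
    · have := add_le_add hY1 (le_refl W)
      rwa [Multiset.sub_add_cancel hW] at this
    · rw [Multiset.card_add]; omega
    · intro s hs
      rw [Multiset.card_add] at hs
      by_cases hsw : s ≤ Multiset.card W + v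
      · obtain ⟨Z, hZ1, hZ2⟩ := hZ s hsw
        refine ⟨Z, hZ1.trans ?_, hZ2⟩
        rw [add_assoc]
        exact Multiset.le_add_left _ _
      · obtain ⟨Z, hZ1, hZ2, hZ3⟩ := hZ (s - Multiset.card Y) (by omega)
        refine ⟨Y + Z, ?_, ?_, ?_⟩
        · rw [add_assoc]; gcongr
        · rw [Multiset.card_add]; omega
        · rw [Multiset.sum_add, hYs, hZ3, add_zero]

lemma core0 {n k v : ℕ} (hk1 : 2 ≤ k) (hk2 : k + 2 ≤ n) {T : Multiset (ZMod n)}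
    (h0 : (0 : ZMod n) ∉ T) (hcard : Multiset.card T + v = n + k - 1)
    (hv : ∀ g, T.count g ≤ v)
    (hX : ∀ I ≤ T + Multiset.replicate v 0, Multiset.card I = n →
      ∃ c : ℕ, 1 ≤ c ∧ c ≤ k ∧ I.sum = (c : ZMod n)) :
    ∃ x₀ : ZMod n, T + Multiset.replicate v 0 =
      Multiset.replicate (n - 1) x₀ + Multiset.replicate k (x₀ + 1) := by
  have hvk : k ≤ v := by
    obtain ⟨W, hW, hWk, hZ⟩ := extract_W (by omega) h0 hcard hv k le_rfl
    obtain ⟨h1, ε, _, hε⟩ := main_W hk1 hk2 h0 hcard hX hW hWk hZ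
    have h2 := Multiset.card_sub hW
    have hWc := Multiset.card_le_card hW
    have h3 := Multiset.eq_replicate_card.mpr hε
    have h4 := Multiset.count_le_of_le ε (Multiset.sub_le_self T W)
    rw [h3, Multiset.count_replicate_self] at h4
    have := hv ε
    omega
  obtain ⟨h1, ε, hε1, hε⟩ := main_W hk1 hk2 h0 hcard hX (Multiset.zero_le _) (by simpa using hvk)
    (fun s hs => ⟨Multiset.replicate s 0, by
      simp only [Multiset.card_zero, zero_add] at hs ⊢
      exact (Multiset.replicate_le_replicate _).mpr hs, by simp, by simp⟩)
  rw [Multiset.sub_zero] at hε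
  simp only [Multiset.card_zero, zero_add] at h1
  have hT := Multiset.eq_replicate_card.mpr hε
  have hsum : ∀ j ≤ Multiset.card T, j ≤ n → n - j ≤ v →
      ∃ c : ℕ, 1 ≤ c ∧ c ≤ k ∧ (j : ZMod n) * ε = (c : ZMod n) := by
    intro j hj hjn hjv
    have := hX (Multiset.replicate j ε + Multiset.replicate (n - j) 0) (by
      refine add_le_add ?_ ((Multiset.replicate_le_replicate _).mpr hjv)
      rw [hT]
      exact (Multiset.replicate_le_replicate _).mpr hj) (by simp; omega)
    simpa using this
  rcases hε1 with rfl | rfl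
  · obtain ⟨c, hc1, hc2, hc3⟩ := hsum (n + k - 1 - v) (by omega) (by omega) (by omega)
    rw [mul_one] at hc3
    have := cast_inj_lt (by omega) (by omega) hc3
    have hvn : v = n - 1 := by omega
    refine ⟨0, ?_⟩
    rw [hT, add_comm, hvn, zero_add]
    congr 2
    omega
  · obtain ⟨c, hc1, hc2, hc3⟩ := hsum (n - v) (by omega) (by omega) (by omega)
    have e : ((n - v : ℕ) : ZMod n) * (-1) = (v : ZMod n) := by
      rw [Nat.cast_sub (by omega)]; simp
    rw [e] at hc3
    have := cast_inj_lt (by omega) (by omega) hc3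
    have hvn : v = k := by omega
    refine ⟨-1, ?_⟩
    rw [hT, hvn, neg_add_cancel]
    congr 2
    omega

lemma core {n k : ℕ} (hk1 : 2 ≤ k) (hk2 : k + 2 ≤ n) {X : Multiset (ZMod n)}
    (hcard : Multiset.card X = n + k - 1)
    (hX : ∀ I ≤ X, Multiset.card I = n →
      ∃ c : ℕ, 1 ≤ c ∧ c ≤ k ∧ I.sum = (c : ZMod n)) :
    ∃ x₀ : ZMod n, X = Multiset.replicate (n - 1) x₀ + Multiset.replicate k (x₀ + 1) := by
  have : NeZero n := ⟨by omega⟩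
  obtain ⟨g, hg⟩ := Finite.exists_max (fun g => X.count g)
  set Y := X.map (fun z => z - g) with hYdef
  have hYX : Y.map (fun z => z + g) = X := by simp [hYdef]
  have hcount : ∀ z, Y.count z = X.count (z + g) := by
    intro z
    rw [← hYX, Multiset.count_map_eq_count' _ _ (add_left_injective g)]
  set T := Y.filter (fun z => z ≠ 0) with hT
  have hsplit : T + Multiset.replicate (X.count g) 0 = Y := by
    have h1 := Multiset.filter_add_not (fun z : ZMod n => z ≠ 0) Y
    rw [← h1]
    congr 1
    have h2 : Y.filter (fun z => ¬ z ≠ 0) = Y.filter (fun z => z = 0) := by simp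
    rw [h2, Multiset.filter_eq', hcount, zero_add]
  have hYc : Multiset.card Y = n + k - 1 := by simp [hYdef, hcard]
  obtain ⟨x₀, hx₀⟩ := core0 (T := T) (v := X.count g) hk1 hk2 (by simp [hT])
    (by rw [← hYc, ← hsplit]; simp) (fun z => by
      refine (Multiset.count_le_of_le z (Multiset.filter_le _ _)).trans ?_
      rw [hcount]; exact hg _) (by
      rw [hsplit]
      intro I hI hIc
      obtain ⟨c, h1, h2, h3⟩ := hX (I.map (fun z => z + g)) (by
        rw [← hYX]; exact Multiset.map_le_map hI) (by simpa using hIc)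
      refine ⟨c, h1, h2, ?_⟩
      rw [← h3, Multiset.sum_map_add]
      simp [hIc])
  rw [hsplit] at hx₀
  refine ⟨x₀ + g, ?_⟩
  rw [← hYX, hx₀]
  simp [add_right_comm]

theorem stmt_14 (n : ℕ) (hn : 4 ≤ n) (k : ℕ) (hk1 : 2 ≤ k) (hk2 : k ≤ n - 2)
    (e₁ e₂ : ZMod n × ZMod n)
    (hbasis : Function.Bijective (fun ab : ZMod n × ZMod n => ab.1 • e₁ + ab.2 • e₂))
    (x : Fin (n + k - 1) → ZMod n)
    (hx : ∑ i ∈ Finset.univ.filter (fun i : Fin (n + k - 1) => (i : ℕ) < n), x i = 1)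
    (S : Multiset (ZMod n × ZMod n))
    (hS : S = Multiset.replicate (n - 1) e₁ +
        Multiset.map (fun i => x i • e₁ + e₂) (Finset.univ : Finset (Fin (n + k - 1))).val)
    (hzs : ∀ T ≤ S, T ≠ 0 → Multiset.card T ≤ 2 * n - 1 - k → T.sum ≠ 0) :
    ∃ x₀ : ZMod n,
      Function.Bijective (fun ab : ZMod n × ZMod n => ab.1 • e₁ + ab.2 • (x₀ • e₁ + e₂)) ∧
      S = Multiset.replicate (n - 1) e₁ + Multiset.replicate (n - 1) (x₀ • e₁ + e₂) +
          Multiset.replicate k (e₁ + (x₀ • e₁ + e₂)) := by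
  have : NeZero n := ⟨by omega⟩
  set X : Multiset (ZMod n) := Multiset.map x (Finset.univ : Finset (Fin (n + k - 1))).val with hXdef
  have hmap : Multiset.map (fun i => x i • e₁ + e₂) (Finset.univ : Finset (Fin (n + k - 1))).val
      = X.map (fun z => z • e₁ + e₂) := by
    rw [hXdef, Multiset.map_map]; rfl
  rw [hmap] at hS
  have hsumI : ∀ I : Multiset (ZMod n), (I.map (fun z => z • e₁ + e₂)).sum
      = I.sum • e₁ + (Multiset.card I : ZMod n) • e₂ := by
    intro I
    induction I using Multiset.induction with
    | empty => simp
    | cons a I ih =>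
      simp only [Multiset.map_cons, Multiset.sum_cons, ih, Multiset.card_cons, Nat.cast_add,
        Nat.cast_one, add_smul, one_smul]
      abel
  obtain ⟨x₀, hx₀⟩ := core (n := n) (k := k) (X := X) hk1 (by omega) (by simp [hXdef]) (by
    intro I hI hIc
    by_contra hcon
    push Not at hcon
    set m := (-I.sum).val with hm
    have hmn : m < n := ZMod.val_lt _
    have hmc : (m : ZMod n) = - I.sum := ZMod.natCast_zmod_val _
    have hmk : m + k < n := by
      by_contra hge
      refine hcon (n - m) (by omega) (by omega) ?_
      rw [Nat.cast_sub hmn.le, hmc]; simp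
    refine hzs (Multiset.replicate m e₁ + I.map (fun z => z • e₁ + e₂)) ?_ ?_ ?_ ?_
    · rw [hS]
      exact add_le_add ((Multiset.replicate_le_replicate _).mpr (by omega)) (Multiset.map_le_map hI)
    · intro h
      have := congrArg Multiset.card h
      rw [Multiset.card_add, Multiset.card_map, hIc, Multiset.card_zero] at this
      omega
    · simp [hIc]; omega
    · rw [Multiset.sum_add, hsumI, hIc, Multiset.sum_replicate, ← Nat.cast_smul_eq_nsmul (ZMod n), hmc]
      simp)
  refine ⟨x₀, ?_, ?_⟩
  · have hb : (fun ab : ZMod n × ZMod n => ab.1 • e₁ + ab.2 • (x₀ • e₁ + e₂)) =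
        (fun ab : ZMod n × ZMod n => ab.1 • e₁ + ab.2 • e₂) ∘
        (fun ab : ZMod n × ZMod n => (ab.1 + ab.2 * x₀, ab.2)) := by
      funext ab
      simp only [Function.comp, smul_add, add_smul, mul_smul]
      abel
    rw [hb]
    refine hbasis.comp ⟨?_, ?_⟩
    · rintro ⟨a, b⟩ ⟨c, d⟩ h
      simp only [Prod.mk.injEq] at h
      obtain ⟨h1, rfl⟩ := h
      simpa using h1
    · rintro ⟨a, b⟩
      exact ⟨(a - b * x₀, b), by simp⟩
  · rw [hS, hx₀]
    simp only [Multiset.map_add, Multiset.map_replicate, add_smul, one_smul]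
    have e : x₀ • e₁ + e₁ + e₂ = e₁ + (x₀ • e₁ + e₂) := by abel
    rw [e, ← add_assoc]
end

section
/- Let p be a prime and let k be an integer with 2 ≤ k ≤ p−2. Then every sequence over G = (ℤ/pℤ) ⊕ (ℤ/pℤ) of length 2p−1+k has a nonempty zero-sum subsequence of length at most 2p−1−k; moreover, the sequence e₁^[p−1] · e₂^[p−1] · (e₁+e₂)^[k], for (e₁,e₂) the standard basis of G, has length 2p−2+k and has no nonempty zero-sum subsequence of length at most 2p−1−k. Hence s_{≤ 2p−1−k}(G) = 2p−1+k. -/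
open Finset in
theorem altSum_aux {ι R : Type*} [Fintype ι] [DecidableEq ι] [CommRing R]
    (P : MvPolynomial ι R) (hP : P.totalDegree < Fintype.card ι) :
    ∑ I : Finset ι, (-1 : R) ^ I.card *
      MvPolynomial.eval (fun i => if i ∈ I then (1 : R) else 0) P = 0 := by
  simp_rw [MvPolynomial.eval_eq', Finset.mul_sum]
  rw [Finset.sum_comm]
  apply Finset.sum_eq_zero
  intro d hd
  have hdeg := MvPolynomial.le_totalDegree hd
  obtain ⟨i, hi⟩ : ∃ i, d i = 0 := by
    by_contra! h
    have h1 : ∑ i : ι, 1 ≤ ∑ i : ι, d i := Finset.sum_le_sum fun i _ => Nat.pos_of_ne_zero (h i)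
    have h2 : (d.sum fun _ e => e) = ∑ i, d i := Finsupp.sum_fintype _ _ (by simp)
    simp at h1
    omega
  have key : ∑ I : Finset ι, ((-1 : R) ^ I.card *
      ∏ j, (if j ∈ I then (1 : R) else 0) ^ d j) = 0 := by
    have h := Finset.prod_add (fun _ : ι => (-1 : R)) (fun j => (0 : R) ^ d j) univ
    rw [Finset.prod_eq_zero (mem_univ i) (by simp [hi])] at h
    rw [Finset.powerset_univ] at h
    refine Eq.trans ?_ h.symm
    refine Finset.sum_congr rfl fun I _ => ?_
    rw [Finset.prod_const]
    congr 1
    rw [← Finset.prod_sdiff (Finset.subset_univ I)]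
    rw [Finset.prod_congr rfl (g := fun j => (0 : R) ^ d j), Finset.prod_eq_one (s := I), mul_one]
    · intro j hj; simp [hj]
    · intro j hj; simp at hj; simp [hj]
  have key2 := congrArg (fun z => MvPolynomial.coeff d P * z) key
  simp only [Finset.mul_sum, mul_zero] at key2
  refine Eq.trans ?_ key2
  refine Finset.sum_congr rfl fun I _ => by ring

open Finset MvPolynomial in
theorem exists_fin_aux (p : ℕ) [Fact p.Prime] (k : ℕ) (hk : k < p) {ι : Type*} [Fintype ι]
    [DecidableEq ι] (g : ι → ZMod p × ZMod p) (hn : 2 * p - 1 + k ≤ Fintype.card ι) :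
    ∃ I : Finset ι, I ≠ ∅ ∧ ∑ i ∈ I, g i = 0 ∧
      ∀ j ∈ Finset.range k, ((I.card + (j + 1) : ℕ) : ZMod p) ≠ 0 := by
  have hp2 := (Fact.out : p.Prime).two_le
  by_contra! hcon
  let LF (a : ι → ZMod p) : MvPolynomial ι (ZMod p) := ∑ i, C (a i) * X i
  have hLF : ∀ a, (LF a).totalDegree ≤ 1 := fun a => by
    refine totalDegree_finsetSum_le fun i _ => ?_
    refine (totalDegree_mul _ _).trans ?_
    simp
  have hLFe : ∀ a (I : Finset ι),
      eval (fun i => if i ∈ I then (1 : ZMod p) else 0) (LF a) = ∑ i ∈ I, a i := by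
    intro a I
    simp [LF]
  let Q (a : ι → ZMod p) : MvPolynomial ι (ZMod p) := 1 - LF a ^ (p - 1)
  have hQ : ∀ a, (Q a).totalDegree ≤ p - 1 := fun a => by
    refine (totalDegree_sub _ _).trans ?_
    refine max_le (by simp) ((totalDegree_pow _ _).trans ?_)
    calc _ ≤ (p - 1) * 1 := Nat.mul_le_mul_left _ (hLF a)
      _ = _ := by simp
  let F : MvPolynomial ι (ZMod p) := ∏ j ∈ range k, (LF (fun _ => 1) + C ((j + 1 : ℕ) : ZMod p))
  have hF : F.totalDegree ≤ k := by
    refine (totalDegree_finsetProd _ _).trans ?_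
    refine (Finset.sum_le_sum (g := fun _ => 1) fun j _ => ?_).trans (by simp)
    refine (totalDegree_add _ _).trans (max_le (hLF _) ((totalDegree_C _).trans_le zero_le_one))
  let P := Q (fun i => (g i).1) * Q (fun i => (g i).2) * F
  have hP : P.totalDegree < Fintype.card ι := by
    have h1 := totalDegree_mul (Q (fun i => (g i).1) * Q (fun i => (g i).2)) F
    have h2 := totalDegree_mul (Q (fun i => (g i).1)) (Q (fun i => (g i).2))
    have h3 := hQ (fun i => (g i).1)
    have h4 := hQ (fun i => (g i).2)
    change (Q (fun i => (g i).1) * Q (fun i => (g i).2) * F).totalDegree < _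
    omega
  have hA := altSum_aux P hP
  have hQe : ∀ a (I : Finset ι), ∑ i ∈ I, a i ≠ 0 →
      eval (fun i => if i ∈ I then (1 : ZMod p) else 0) (Q a) = 0 := by
    intro a I h
    simp only [Q, map_sub, map_one, map_pow, hLFe]
    rw [ZMod.pow_card_sub_one_eq_one h, sub_self]
  rw [Finset.sum_eq_single ∅] at hA
  · simp only [P, Q, F, map_mul, map_sub, map_one, map_pow, map_prod, map_add, hLFe, eval_C] at hA
    have : p - 1 ≠ 0 := by omega
    simp only [sum_empty, card_empty, zero_pow this, pow_zero, sub_zero, one_mul, zero_add] at hA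
    rw [Finset.prod_eq_zero_iff] at hA
    obtain ⟨j, hj, h⟩ := hA
    rw [ZMod.natCast_eq_zero_iff] at h
    have := Nat.le_of_dvd (by omega) h
    simp at hj
    omega
  · intro I _ hI
    by_cases h1 : ∑ i ∈ I, (g i).1 = 0
    · by_cases h2 : ∑ i ∈ I, (g i).2 = 0
      · obtain ⟨j, hj, h⟩ := hcon I (Finset.nonempty_iff_ne_empty.2 hI) (by ext <;> simp [Prod.fst_sum, Prod.snd_sum, h1, h2])
        have : eval (fun i => if i ∈ I then (1 : ZMod p) else 0) F = 0 := by
          simp only [F, map_prod, map_add, hLFe, eval_C]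
          refine Finset.prod_eq_zero hj ?_
          rw [← h]; simp
        simp [P, this]
      · simp [P, hQe _ I h2]
    · simp [P, hQe _ I h1]
  · simp

theorem exists_ms_aux (p : ℕ) [Fact p.Prime] (k : ℕ) (hk : k < p)
    (S : Multiset (ZMod p × ZMod p)) (hn : 2 * p - 1 + k ≤ Multiset.card S) :
    ∃ T ≤ S, T ≠ 0 ∧ T.sum = 0 ∧
      ∀ j < k, ¬ p ∣ Multiset.card T + (j + 1) := by
  obtain ⟨l, rfl⟩ : ∃ l : List (ZMod p × ZMod p), (l : Multiset _) = S := ⟨S.toList, by simp⟩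
  obtain ⟨I, hI, hs, hc⟩ := exists_fin_aux p k hk (fun i : Fin l.length => l.get i) (by simpa using hn)
  refine ⟨I.val.map (fun i => l.get i), ?_, ?_, hs, ?_⟩
  · calc I.val.map (fun i => l.get i) ≤ (Finset.univ : Finset (Fin l.length)).val.map (fun i => l.get i) :=
          Multiset.map_le_map (Finset.val_le_iff.2 (Finset.subset_univ I))
      _ = l := by simp
  · simpa using hI
  · intro j hj h
    refine hc j (by simpa using hj) ?_
    rw [ZMod.natCast_eq_zero_iff]
    simpa using h

theorem part1_aux (p : ℕ) [Fact p.Prime] (k : ℕ) (hk1 : 2 ≤ k) (hk2 : k ≤ p - 2)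
    (S : Multiset (ZMod p × ZMod p)) (hS : Multiset.card S = 2 * p - 1 + k) :
      ∃ T ≤ S, T ≠ 0 ∧ Multiset.card T ≤ 2 * p - 1 - k ∧ T.sum = 0 := by
  by_contra! hcon
  have hlong : ∀ T ≤ S, T ≠ 0 → T.sum = 0 → 2 * p - 1 - k < Multiset.card T := by
    intro T h1 h2 h3
    by_contra h
    exact hcon T h1 h2 (by omega) h3
  obtain ⟨T, hT, hT0, hTs, hc⟩ := exists_ms_aux p k (by omega) S (by omega)
  have h1 := hlong T hT hT0 hTs
  have h2 := Multiset.card_le_card hT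
  by_cases hL : Multiset.card T < 2 * p
  · refine hc (2 * p - Multiset.card T - 1) (by omega) ⟨2, by omega⟩
  · obtain ⟨a, ha⟩ := Multiset.exists_mem_of_ne_zero hT0
    have hca := Multiset.card_erase_of_mem ha
    rw [Nat.pred_eq_sub_one] at hca
    obtain ⟨U, hU, hU0, hUs, -⟩ := exists_ms_aux p 0 (by omega) (T.erase a) (by omega)
    have hUT := hU.trans (Multiset.erase_le a T)
    obtain ⟨V, rfl⟩ := Multiset.le_iff_exists_add.1 hUT
    have h3 := Multiset.card_le_card hU
    have h4 := hlong U (hUT.trans hT) hU0 hUs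
    have hVs : V.sum = 0 := by simpa [hUs] using hTs
    rw [Multiset.card_add] at *
    have h5 := hlong V ((Multiset.le_add_left V U).trans hT) (by
      rintro rfl; simp at *; omega) hVs
    exact hc (3 * p - (Multiset.card U + Multiset.card V) - 1) (by omega) ⟨3, by omega⟩

theorem le_add_aux {α : Type*} {T A B : Multiset α} (h : T ≤ A + B) :
    ∃ T1 ≤ A, ∃ T2 ≤ B, T = T1 + T2 := by
  classical
  refine ⟨T ∩ A, Multiset.inter_le_right, T - A, ?_, ?_⟩
  · rw [tsub_le_iff_left]; exact h
  · ext x; simp; omega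

theorem exists_sub_aux {α : Type*} {A : Multiset α} {l : ℕ} (h : l ≤ Multiset.card A) :
    ∃ S ≤ A, Multiset.card S = l := by
  induction A using Quotient.inductionOn with
  | h L =>
    refine ⟨(L.take l : List α), ?_, ?_⟩
    · exact (List.take_sublist l L).subperm
    · simpa using h

theorem part2_aux (p : ℕ) (k : ℕ) (hk1 : 2 ≤ k) (hk2 : k ≤ p - 2)
    (T : Multiset (ZMod p × ZMod p))
    (hT : T ≤ Multiset.replicate (p - 1) ((1, 0) : ZMod p × ZMod p) +
          Multiset.replicate (p - 1) ((0, 1) : ZMod p × ZMod p) +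
          Multiset.replicate k ((1, 1) : ZMod p × ZMod p))
    (hT0 : T ≠ 0) (hc : Multiset.card T ≤ 2 * p - 1 - k) : T.sum ≠ 0 := by
  intro hs
  obtain ⟨T', h', T3, h3, rfl⟩ := le_add_aux hT
  obtain ⟨T1, h1, T2, h2, rfl⟩ := le_add_aux h'
  obtain ⟨a, ha, rfl⟩ := Multiset.le_replicate_iff.1 h1
  obtain ⟨b, hb, rfl⟩ := Multiset.le_replicate_iff.1 h2
  obtain ⟨c, hcc, rfl⟩ := Multiset.le_replicate_iff.1 h3
  simp [Multiset.sum_replicate, Prod.ext_iff] at hs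
  obtain ⟨e1, e2⟩ := hs
  rw [← Nat.cast_add, ZMod.natCast_eq_zero_iff] at e1 e2
  obtain ⟨x, hx⟩ := e1
  obtain ⟨y, hy⟩ := e2
  have hx2 : x < 2 := by by_contra! h; have := Nat.mul_le_mul_left p h; omega
  have hy2 : y < 2 := by by_contra! h; have := Nat.mul_le_mul_left p h; omega
  simp only [Multiset.card_add, Multiset.card_replicate] at hc
  rcases Nat.eq_zero_or_pos (a + b + c) with h0 | h0
  · apply hT0
    obtain ⟨rfl, rfl, rfl⟩ : a = 0 ∧ b = 0 ∧ c = 0 := by omega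
    simp
  · interval_cases x <;> interval_cases y <;> omega

/-- `s_{≤ 2p-1-k}((ℤ/pℤ)²) = 2p-1+k` for `2 ≤ k ≤ p-2`: every sequence of length
`2p-1+k` has a nonempty zero-sum subsequence of length at most `2p-1-k`; the sequence
`e₁^[p-1] · e₂^[p-1] · (e₁+e₂)^[k]` (standard basis) has length `2p-2+k` and no such
subsequence; hence the smallest length forcing such a subsequence is `2p-1+k`. -/
theorem stmt_15 (p : ℕ) (hp : p.Prime) (k : ℕ) (hk1 : 2 ≤ k) (hk2 : k ≤ p - 2) :
    (∀ S : Multiset (ZMod p × ZMod p), Multiset.card S = 2 * p - 1 + k →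
      ∃ T ≤ S, T ≠ 0 ∧ Multiset.card T ≤ 2 * p - 1 - k ∧ T.sum = 0) ∧
    (Multiset.card (Multiset.replicate (p - 1) ((1, 0) : ZMod p × ZMod p) +
        Multiset.replicate (p - 1) ((0, 1) : ZMod p × ZMod p) +
        Multiset.replicate k ((1, 1) : ZMod p × ZMod p)) = 2 * p - 2 + k ∧
      ∀ T ≤ Multiset.replicate (p - 1) ((1, 0) : ZMod p × ZMod p) +
          Multiset.replicate (p - 1) ((0, 1) : ZMod p × ZMod p) +
          Multiset.replicate k ((1, 1) : ZMod p × ZMod p),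
        T ≠ 0 → Multiset.card T ≤ 2 * p - 1 - k → T.sum ≠ 0) ∧
    sInf {ℓ : ℕ | ∀ S : Multiset (ZMod p × ZMod p), Multiset.card S = ℓ →
      ∃ T ≤ S, T ≠ 0 ∧ Multiset.card T ≤ 2 * p - 1 - k ∧ T.sum = 0} = 2 * p - 1 + k := by
  haveI : Fact p.Prime := ⟨hp⟩
  have hcard : Multiset.card (Multiset.replicate (p - 1) ((1, 0) : ZMod p × ZMod p) +
        Multiset.replicate (p - 1) ((0, 1) : ZMod p × ZMod p) +
        Multiset.replicate k ((1, 1) : ZMod p × ZMod p)) = 2 * p - 2 + k := by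
    simp only [Multiset.card_add, Multiset.card_replicate]
    omega
  refine ⟨part1_aux p k hk1 hk2, ⟨hcard, part2_aux p k hk1 hk2⟩, ?_⟩
  refine IsLeast.csInf_eq ⟨part1_aux p k hk1 hk2, ?_⟩
  intro l hl
  by_contra! hlt
  have hle : l ≤ Multiset.card (Multiset.replicate (p - 1) ((1, 0) : ZMod p × ZMod p) +
        Multiset.replicate (p - 1) ((0, 1) : ZMod p × ZMod p) +
        Multiset.replicate k ((1, 1) : ZMod p × ZMod p)) := by
    rw [hcard]; omega
  obtain ⟨S, hS, hSc⟩ := exists_sub_aux hle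
  obtain ⟨T, hT, hT0, hTc, hTs⟩ := hl S hSc
  exact part2_aux p k hk1 hk2 T (hT.trans hS) hT0 hTc hTs
end
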